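/- There exists an n-uniform hypergraph H with maximum vertex degree at most 2^(n+1)/n on which Maker has a winning strategy in the Maker–Breaker game. -/

import Mathlib

def MakerWinsAux {V : Type} [DecidableEq V] (E : Finset (Finset V)) :
    ℕ → Finset V → Finset V → Prop
  | 0, M, _ => ∃ e ∈ E, e ⊆ M
  | k+1, M, U =>
      (∃ e ∈ E, e ⊆ M) ∨
      ∃ v ∈ U, (∃ e ∈ E, e ⊆ insert v M) ∨
        ((U.erase v).Nonempty ∧
          ∀ w ∈ U.erase v, MakerWinsAux E k (insert v M) ((U.erase v).erase w))

/-- Maker (moving first) has a winning strategy in the Maker-Breaker game on the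
hypergraph with edge set `E`, played on the board `B`. -/
def MakerWins {V : Type} [DecidableEq V] (E : Finset (Finset V)) (B : Finset V) : Prop :=
  MakerWinsAux E B.card ∅ B

/-- Generic strategy: Maker walks down the binary tree of lists (children of `v` are `b :: v`). -/
theorem walk_down (E : Finset (Finset (List Bool))) (B : Finset (List Bool))
    (hB : ∀ v ∈ B, (∃ e ∈ E, ∀ u ∈ e, u <:+ v) ∨ ∀ b : Bool, (b :: v) ∈ B) :
    ∀ (k : ℕ) (M U : Finset (List Bool)) (v : List Bool), v ∈ B →
      (∀ u ∈ B, v <:+ u → u ∈ U) → (∀ u, u <:+ v → u ≠ v → u ∈ M) →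
      (B.filter fun u => v <:+ u).card ≤ k → MakerWinsAux E k M U := by
  intro k
  induction k with
  | zero =>
    intro M U v hv _ _ hk
    exfalso
    have : v ∈ B.filter fun u => v <:+ u := by simp [hv]
    have := Finset.card_pos.2 ⟨v, this⟩
    omega
  | succ k ih =>
    intro M U v hv hU hM hk
    right
    refine ⟨v, hU v hv (List.suffix_refl v), ?_⟩
    rcases hB v hv with ⟨e, he, hes⟩ | hch
    · left
      refine ⟨e, he, fun u hu => ?_⟩
      by_cases h : u = v
      · simp [h]
      · exact Finset.mem_insert_of_mem (hM u (hes u hu) h)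
    · right
      have hne : ∀ (b : Bool) (u : List Bool), (b :: v) <:+ u → u ≠ v := by
        intro b u h1 h2
        have := h1.length_le
        simp [h2] at this
      refine ⟨⟨true :: v, ?_⟩, ?_⟩
      · exact Finset.mem_erase.2 ⟨by simp, hU _ (hch true) (List.suffix_cons _ _)⟩
      · intro w _
        obtain ⟨b, hb⟩ : ∃ b : Bool, ¬ (b :: v) <:+ w := by
          by_contra hcon
          push Not at hcon
          have h1 := hcon true
          have h2 := hcon false
          have h3 := List.suffix_of_suffix_length_le h1 h2 (by simp)
          have h4 := h3.eq_of_length (by simp)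
          simp at h4
        refine ih _ _ (b :: v) (hch b) ?_ ?_ ?_
        · intro u hu hs
          refine Finset.mem_erase.2 ⟨?_, Finset.mem_erase.2 ⟨hne b u hs, ?_⟩⟩
          · rintro rfl
            exact hb hs
          · exact hU u hu ((List.suffix_cons b v).trans hs)
        · intro u hu hne'
          rcases List.suffix_cons_iff.1 hu with h | h
          · exact absurd h hne'
          · by_cases h5 : u = v
            · simp [h5]
            · exact Finset.mem_insert_of_mem (hM u h h5)
        · have hlt : (B.filter fun u => (b :: v) <:+ u).card <
              (B.filter fun u => v <:+ u).card := by
            apply Finset.card_lt_card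
            refine Finset.ssubset_iff_subset_ne.2 ⟨?_, ?_⟩
            · intro u hu
              rw [Finset.mem_filter] at hu ⊢
              exact ⟨hu.1, (List.suffix_cons b v).trans hu.2⟩
            · intro heq
              have : v ∈ B.filter fun u => v <:+ u := by simp [hv]
              rw [← heq, Finset.mem_filter] at this
              exact hne b v this.2 rfl
          omega

/-- The `s` low bits of `m`. -/
def lowBits : ℕ → ℕ → List Bool
  | 0, _ => []
  | s + 1, m => decide (m % 2 = 1) :: lowBits s (m / 2)

theorem lowBits_length (s m : ℕ) : (lowBits s m).length = s := by
  induction s generalizing m with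
  | zero => rfl
  | succ s ih => simp [lowBits, ih]

theorem lowBits_zero (s : ℕ) : lowBits s 0 = List.replicate s false := by
  induction s with
  | zero => rfl
  | succ s ih => simp [lowBits, ih, List.replicate_succ]

theorem lowBits_surj (s : ℕ) (x : List Bool) (hx : x.length = s) :
    ∃ m < 2 ^ s, lowBits s m = x := by
  induction s generalizing x with
  | zero => exact ⟨0, by simp, by simp [lowBits, List.length_eq_zero_iff.1 hx]⟩
  | succ s ih =>
    cases x with
    | nil => simp at hx
    | cons b t =>
      obtain ⟨m, hm, hmt⟩ := ih t (by simpa using hx)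
      refine ⟨2 * m + b.toNat, ?_, ?_⟩
      · have := Bool.toNat_le b
        rw [pow_succ]; omega
      · have h1 : (2 * m + b.toNat) / 2 = m := by cases b <;> simp; omega
        have h2 : decide ((2 * m + b.toNat) % 2 = 1) = b := by
          cases b <;> simp
        simp only [lowBits, h1, h2, hmt]

/-- Boolean lists of length `m`. -/
def listsOf (m : ℕ) : Finset (List Bool) :=
  (Finset.univ : Finset (Fin m → Bool)).image List.ofFn

theorem mem_listsOf (m : ℕ) (l : List Bool) : l ∈ listsOf m ↔ l.length = m := by
  unfold listsOf
  rw [Finset.mem_image]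
  constructor
  · rintro ⟨f, _, rfl⟩; simp
  · rintro rfl
    exact ⟨l.get, Finset.mem_univ _, List.ofFn_get l⟩

theorem card_listsOf (m : ℕ) : (listsOf m).card ≤ 2 ^ m := by
  refine Finset.card_image_le.trans ?_
  simp

/-- Leaves of the tree: a full binary tree of depth `m` hangs below each node at depth
`r + s` whose last `s` bits encode `m`. -/
def leafSet (s r : ℕ) : Finset (List Bool) :=
  (Finset.range (2 ^ s)).biUnion fun m =>
    (listsOf m ×ˢ listsOf r).image fun p => p.1 ++ (lowBits s m ++ p.2)

theorem mem_leafSet (s r : ℕ) (l : List Bool) : l ∈ leafSet s r ↔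
    ∃ m < 2 ^ s, ∃ y z : List Bool, y.length = m ∧ z.length = r ∧ y ++ (lowBits s m ++ z) = l := by
  simp only [leafSet, Finset.mem_biUnion, Finset.mem_range, Finset.mem_image, Finset.mem_product,
    mem_listsOf, Prod.exists]
  constructor
  · rintro ⟨m, hm, y, z, ⟨h1, h2⟩, h3⟩; exact ⟨m, hm, y, z, h1, h2, h3⟩
  · rintro ⟨m, hm, y, z, h1, h2, h3⟩; exact ⟨m, hm, y, z, ⟨h1, h2⟩, h3⟩

/-- The hyperedge of a leaf: its last `n` ancestors. -/
def edgeOf (n : ℕ) (l : List Bool) : Finset (List Bool) :=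
  (Finset.range n).image fun j => l.drop j

theorem mem_edgeOf (n : ℕ) (l v : List Bool) : v ∈ edgeOf n l ↔ ∃ j < n, l.drop j = v := by
  simp [edgeOf]

theorem mem_edgeOf_append (n : ℕ) (t v : List Bool) (h : t.length < n) :
    v ∈ edgeOf n (t ++ v) := by
  rw [mem_edgeOf]; exact ⟨t.length, h, by simp⟩

theorem sum_two_pow_le (a : ℕ) : ∑ m ∈ Finset.range a, 2 ^ m ≤ 2 ^ a := by
  induction a with
  | zero => simp
  | succ a ih => rw [Finset.sum_range_succ, pow_succ]; omega

theorem degree_low (s r a : ℕ) (v : List Bool) (hv : v.length = a) (ha : a ≤ r) :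
    ((leafSet s r).filter fun l => v ∈ edgeOf (r + s + 1) l).card ≤ 2 ^ (r + 1) := by
  have hsub : ((leafSet s r).filter fun l => v ∈ edgeOf (r + s + 1) l) ⊆
      (Finset.range (a + 1)).biUnion fun m =>
        (listsOf m ×ˢ listsOf (r - a)).image fun p => p.1 ++ (lowBits s m ++ (p.2 ++ v)) := by
    intro l hl
    rw [Finset.mem_filter, mem_leafSet, mem_edgeOf] at hl
    obtain ⟨⟨m, hm, y, z, hy, hz, rfl⟩, j, hj, hjv⟩ := hl
    have hlen := congrArg List.length hjv
    simp only [List.length_drop, List.length_append, lowBits_length, hy, hz, hv] at hlen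
    have hsuf : v <:+ y ++ (lowBits s m ++ z) := hjv ▸ List.drop_suffix _ _
    have hzs : z <:+ y ++ (lowBits s m ++ z) := ⟨y ++ lowBits s m, by simp⟩
    obtain ⟨z', rfl⟩ := List.suffix_of_suffix_length_le hsuf hzs (by omega)
    simp only [Finset.mem_biUnion, Finset.mem_range, Finset.mem_image, Finset.mem_product,
      mem_listsOf, Prod.exists]
    simp only [List.length_append] at hz
    exact ⟨m, by omega, y, z', ⟨hy, by omega⟩, rfl⟩
  refine (Finset.card_le_card hsub).trans (Finset.card_biUnion_le.trans ?_)
  calc _ ≤ ∑ m ∈ Finset.range (a + 1), 2 ^ m * 2 ^ (r - a) := by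
        refine Finset.sum_le_sum fun m _ => Finset.card_image_le.trans ?_
        rw [Finset.card_product]
        exact Nat.mul_le_mul (card_listsOf _) (card_listsOf _)
    _ ≤ 2 ^ (a + 1) * 2 ^ (r - a) := by
        rw [← Finset.sum_mul]
        exact Nat.mul_le_mul_right _ (sum_two_pow_le _)
    _ = 2 ^ (r + 1) := by rw [← pow_add]; congr 1; omega

theorem degree_high (s r n : ℕ) (v : List Bool) (ha : r ≤ v.length) :
    ((leafSet s r).filter fun l => v ∈ edgeOf n l).card ≤ 2 ^ (2 ^ s) := by
  have hsub : ((leafSet s r).filter fun l => v ∈ edgeOf n l) ⊆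
      (Finset.range (2 ^ s)).biUnion fun m =>
        (listsOf m).image fun y => y ++ (lowBits s m ++ v.drop (v.length - r)) := by
    intro l hl
    rw [Finset.mem_filter, mem_leafSet, mem_edgeOf] at hl
    obtain ⟨⟨m, hm, y, z, hy, hz, rfl⟩, j, hj, hjv⟩ := hl
    have hsuf : v <:+ y ++ (lowBits s m ++ z) := hjv ▸ List.drop_suffix _ _
    have hzs : z <:+ y ++ (lowBits s m ++ z) := ⟨y ++ lowBits s m, by simp⟩
    obtain ⟨t, rfl⟩ := List.suffix_of_suffix_length_le hzs hsuf (by omega)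
    simp only [Finset.mem_biUnion, Finset.mem_range, Finset.mem_image, mem_listsOf]
    refine ⟨m, hm, y, hy, ?_⟩
    have : (t ++ z).length - r = t.length := by simp; omega
    rw [this]; simp
  refine (Finset.card_le_card hsub).trans (Finset.card_biUnion_le.trans ?_)
  refine le_trans (Finset.sum_le_sum fun m _ => ?_) (sum_two_pow_le (2 ^ s))
  exact Finset.card_image_le.trans (card_listsOf _)

/-- Every node at depth at most `r + s` lies in some hyperedge. -/
theorem node_low (s r : ℕ) (hr : 2 ^ s ≤ r + 1) (v : List Bool) (hv : v.length ≤ r + s) :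
    ∃ l ∈ leafSet s r, v ∈ edgeOf (r + s + 1) l := by
  set p := r + s - v.length with hp
  set w := List.replicate p false ++ v with hw
  have hwl : w.length = r + s := by simp [hw]; omega
  have key : ∃ m < 2 ^ s, lowBits s m = w.take s ∧ m + p < r + s + 1 := by
    by_cases hps : s ≤ p
    · refine ⟨0, by positivity, ?_, by omega⟩
      rw [lowBits_zero, hw, List.take_append_of_le_length (by simpa using hps)]
      simp [hps]
    · obtain ⟨m, hm, hmx⟩ := lowBits_surj s (w.take s) (by simp [hwl])
      exact ⟨m, hm, hmx, by omega⟩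
  obtain ⟨m, hm, hmx, hlt⟩ := key
  refine ⟨List.replicate m false ++ w, ?_, ?_⟩
  · rw [mem_leafSet]
    refine ⟨m, hm, List.replicate m false, w.drop s, by simp, by simp [hwl], ?_⟩
    rw [hmx, List.take_append_drop]
  · rw [hw, ← List.append_assoc]
    apply mem_edgeOf_append
    simpa using hlt

theorem maker_win_max_degree_weak : ∃ n₀ : ℕ, ∀ n : ℕ, n₀ ≤ n → (∃ k, n = 2 ^ k) →
    ∃ E : Finset (Finset (List Bool)),
      (∀ e ∈ E, e.card = n) ∧
      (∀ v : List Bool, n * (E.filter fun e => v ∈ e).card ≤ 2 ^ (n + 1)) ∧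
      MakerWins E (E.biUnion id) := by
  refine ⟨2, ?_⟩
  rintro n hn ⟨k, hk⟩
  obtain ⟨s, rfl⟩ : ∃ s, k = s + 1 := by
    cases k with
    | zero => simp at hk; omega
    | succ s => exact ⟨s, rfl⟩
  have hs : s < 2 ^ s := Nat.lt_two_pow_self
  have hn2 : n = 2 * 2 ^ s := by rw [hk, pow_succ]; ring
  obtain ⟨r, hr⟩ : ∃ r, n = r + s + 1 := ⟨n - s - 1, by omega⟩
  have hr2 : 2 ^ s ≤ r + 1 := by omega
  have hmemB : ∀ v, v ∈ ((leafSet s r).image (edgeOf n)).biUnion id ↔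
      ∃ l ∈ leafSet s r, v ∈ edgeOf n l := by
    intro v; simp
  refine ⟨(leafSet s r).image (edgeOf n), ?_, ?_, ?_⟩
  · intro e he
    obtain ⟨l, hl, rfl⟩ := Finset.mem_image.1 he
    obtain ⟨m, hm, y, z, hy, hz, rfl⟩ := (mem_leafSet _ _ _).1 hl
    unfold edgeOf
    rw [Finset.card_image_of_injOn, Finset.card_range]
    intro i hi j hj hij
    have := congrArg List.length hij
    simp only [List.length_drop, List.length_append, lowBits_length, hy, hz] at this
    simp only [Finset.coe_range, Set.mem_Iio] at hi hj
    omega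
  · intro v
    have h1 : (((leafSet s r).image (edgeOf n)).filter fun e => v ∈ e).card ≤
        ((leafSet s r).filter fun l => v ∈ edgeOf n l).card := by
      rw [Finset.filter_image]
      exact Finset.card_image_le
    refine (Nat.mul_le_mul_left n h1).trans ?_
    rcases le_total v.length r with h | h
    · have h2 := degree_low s r _ v rfl h
      rw [← hr] at h2
      refine (Nat.mul_le_mul_left n h2).trans ?_
      conv_lhs => rw [hk]
      rw [← pow_add]
      exact Nat.pow_le_pow_right (by norm_num) (by omega)
    · refine (Nat.mul_le_mul_left n (degree_high s r n v h)).trans ?_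
      conv_lhs => rw [hk]
      rw [← pow_add]
      exact Nat.pow_le_pow_right (by norm_num) (by omega)
  · refine walk_down _ (((leafSet s r).image (edgeOf n)).biUnion id) ?_ _ _ _ [] ?_ ?_ ?_ ?_
    · intro v hv
      obtain ⟨l, hl, hvl⟩ := (hmemB v).1 hv
      obtain ⟨j, hj, hjv⟩ := (mem_edgeOf _ _ _).1 hvl
      rcases Nat.eq_zero_or_pos j with rfl | hj0
      · left
        refine ⟨edgeOf n l, Finset.mem_image_of_mem _ hl, ?_⟩
        intro u hu
        obtain ⟨i, _, rfl⟩ := (mem_edgeOf _ _ _).1 hu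
        rw [← hjv]
        exact List.drop_suffix _ _
      · right
        intro b
        rw [hmemB]
        by_cases hlen : v.length + 1 ≤ r + s
        · rw [hr]
          exact node_low s r hr2 (b :: v) (by simpa using hlen)
        · obtain ⟨m, hm, y, z, hy, hz, rfl⟩ := (mem_leafSet _ _ _).1 hl
          have hlv := congrArg List.length hjv
          simp only [List.length_drop, List.length_append, lowBits_length, hy, hz] at hlv
          have hjm : j ≤ m := by omega
          rw [List.drop_append_of_le_length (by omega)] at hjv
          refine ⟨(List.replicate (j - 1) false ++ b :: y.drop j) ++ (lowBits s m ++ z), ?_, ?_⟩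
          · rw [mem_leafSet]
            refine ⟨m, hm, _, z, ?_, hz, rfl⟩
            simp [hy]; omega
          · rw [← hjv]
            have := mem_edgeOf_append n (List.replicate (j - 1) false)
              (b :: (y.drop j ++ (lowBits s m ++ z))) (by simp; omega)
            simpa using this
    · rw [hmemB, hr]
      exact node_low s r hr2 [] (by simp)
    · intro u hu _; exact hu
    · intro u hu hne
      exact absurd (List.suffix_nil.1 hu) hne
    · exact Finset.card_filter_le _ _
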